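/- Let f : ℝⁿ × ℝᵖ → ℝⁿ be continuously differentiable with differentiable ℓ-Lipschitz steady-state map h, and let W be a differentiable Lyapunov function with constants α, β, γ, ζ > 0 (α‖x−h(u)‖² ≤ W(x,u) ≤ β‖x−h(u)‖², ⟨∇ₓW(x,u), f(x,u)⟩ ≤ −γ‖x−h(u)‖², ‖∇ᵤW(x,u)‖ ≤ ζ‖x−h(u)‖). Let Φ : ℝⁿ × ℝᵖ → ℝ be continuously differentiable such that u ↦ Φ(h(u),u) has compact sublevel sets and the L-bound ‖H(u)ᵀ(∇Φ(x',u) − ∇Φ(x,u))‖ ≤ L‖x'−x‖ holds. Let Q, D be locally Lipschitz maps of symmetric positive definite linear maps on ℝᵖ, and suppose there exist κ, λ > 0 with ‖Q(u)‖ ≤ κ for all u, ⟨D(u)z, z⟩ ≥ λ‖z‖² for all u, z, and κ²/λ < γ/(ζL). Then every complete solution (x,u,z) of ẋ = f(x,u), u̇ = Q(u)z, ż = −D(u)z − Q(u)H(u)ᵀ∇Φ(x,u) converges to the set {(x,u,z) : z = 0, x = h(u), H(u)ᵀ∇Φ(x,u) = 0}. -/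

import Mathlib

open Filter Metric Real
open scoped RealInnerProductSpace Topology NNReal
open scoped ContDiff

/-! The function `V(x,u,z) = Φ(h(u),u) + ½‖z‖² + (L/ζ) W(x,u)` has compact sublevel sets. Along
solutions the terms `⟪H(u)ᵀ∇Φ(h(u),u), Q(u)z⟫` and `-⟪z, Q(u)H(u)ᵀ∇Φ(x,u)⟫` cancel up to an error of
size `L κ ‖x - h(u)‖ ‖z‖`, and the gain condition says exactly that `V` then dissipates a positive
definite quadratic form in `(‖z‖, ‖x - h(u)‖)`. Barbalat's argument gives `z → 0` and
`x - h(u) → 0`; a second application to `z` gives `ż → 0`, hence `Q(u)H(u)ᵀ∇Φ(x,u) → 0`, and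
compactness turns this into convergence to the set.

The second application needs `Dh` to be continuous. By the implicit function theorem this follows
once `∂ₓf` is injective at the steady states. If `∂ₓf(h(u),u)` killed a direction, then along that
direction `f` would be too small for `W` to decrease at the rate `γ‖x - h(u)‖²` while staying below
`β‖x - h(u)‖²`; a logarithmic barrier makes this quantitative. -/

section Barbalat

variable {E : Type*} [NormedAddCommGroup E] {a : ℝ}

lemma exists_forall_mem_Icc_norm_sub_le {g : ℝ → E}
    (hg : UniformContinuousOn g (Set.Ici a)) {ε : ℝ} (hε : 0 < ε) :
    ∃ δ > 0, ∀ t ≥ a, ∀ s ∈ Set.Icc t (t + δ), ‖g s - g t‖ ≤ ε := by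
  obtain ⟨δ, hδ, hgδ⟩ := Metric.uniformContinuousOn_iff.1 hg ε hε
  refine ⟨δ / 2, half_pos hδ, fun t ht s hs => ?_⟩
  have hst : dist s t < δ := by
    rw [Real.dist_eq, abs_of_nonneg (sub_nonneg.2 hs.1)]
    linarith [hs.2]
  rw [← dist_eq_norm]
  exact (hgδ s (ht.trans hs.1) t ht hst).le

lemma tendsto_sub_shift_of_tendsto {z : ℝ → E} {l : E} (hz : Tendsto z atTop (𝓝 l)) (δ : ℝ) :
    Tendsto (fun t => z (t + δ) - z t) atTop (𝓝 0) := by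
  simpa using (hz.comp (tendsto_atTop_add_const_right _ δ tendsto_id)).sub hz

theorem tendsto_deriv_zero_of_uniformContinuousOn [NormedSpace ℝ E] {z z' : ℝ → E} {l : E}
    (hz : ∀ t ∈ Set.Ici a, HasDerivWithinAt z (z' t) (Set.Ici a) t)
    (hlim : Tendsto z atTop (𝓝 l)) (hz' : UniformContinuousOn z' (Set.Ici a)) :
    Tendsto z' atTop (𝓝 0) := by
  rw [NormedAddGroup.tendsto_nhds_zero]
  intro ε hε
  obtain ⟨δ, hδ, hclose⟩ := exists_forall_mem_Icc_norm_sub_le hz' (half_pos hε)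
  have hincr := NormedAddGroup.tendsto_nhds_zero.1 (tendsto_sub_shift_of_tendsto hlim δ)
    (δ * (ε / 2)) (by positivity)
  filter_upwards [hincr, eventually_ge_atTop a] with t ht hat
  have hIcc : Set.Icc t (t + δ) ⊆ Set.Ici a := fun s hs => hat.trans hs.1
  have htaylor : ‖(z (t + δ) - (t + δ) • z' t) - (z t - t • z' t)‖ ≤ ε / 2 * ‖t + δ - t‖ :=
    Convex.norm_image_sub_le_of_norm_hasDerivWithin_le
      (f := fun s => z s - s • z' t) (f' := fun s => z' s - (1 : ℝ) • z' t)
      (fun s hs => ((hz s (hIcc hs)).mono hIcc).sub ((hasDerivWithinAt_id s _).smul_const _))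
      (fun s hs => by simpa only [one_smul] using hclose t hat s hs) (convex_Icc _ _)
      (Set.left_mem_Icc.2 (by linarith)) (Set.right_mem_Icc.2 (by linarith))
  have hscaled : δ * ‖z' t‖ < δ * ε :=
    calc δ * ‖z' t‖ = ‖δ • z' t‖ := by rw [norm_smul, Real.norm_of_nonneg hδ.le]
      _ = ‖(z (t + δ) - z t) - ((z (t + δ) - (t + δ) • z' t) - (z t - t • z' t))‖ := by
        congr 1; module
      _ ≤ ‖z (t + δ) - z t‖ + ‖(z (t + δ) - (t + δ) • z' t) - (z t - t • z' t)‖ :=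
        norm_sub_le _ _
      _ < δ * (ε / 2) + ε / 2 * ‖t + δ - t‖ := add_lt_add_of_lt_of_le ht htaylor
      _ = δ * ε := by rw [add_sub_cancel_left, Real.norm_of_nonneg hδ.le]; ring
  exact lt_of_mul_lt_mul_left hscaled hδ.le

lemma exists_tendsto_of_antitoneOn_Ici {V : ℝ → ℝ} {m : ℝ} (hV : AntitoneOn V (Set.Ici a))
    (hm : ∀ t ∈ Set.Ici a, m ≤ V t) : ∃ l, Tendsto V atTop (𝓝 l) := by
  have hanti : Antitone fun t => V (max a t) := fun s t hst =>
    hV (le_max_left a s) (le_max_left a t) (max_le_max_left a hst)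
  have hbdd : BddBelow (Set.range fun t => V (max a t)) :=
    ⟨m, Set.forall_mem_range.2 fun t => hm _ (le_max_left a t)⟩
  refine ⟨_, (tendsto_atTop_ciInf hanti hbdd).congr' ?_⟩
  filter_upwards [eventually_ge_atTop a] with t ht
  rw [max_eq_right ht]

lemma antitoneOn_of_deriv_le_neg_mul_norm_sq {V V' : ℝ → ℝ} {g : ℝ → E} {c : ℝ} (hc : 0 ≤ c)
    (hV : ∀ t ∈ Set.Ici a, HasDerivWithinAt V (V' t) (Set.Ici a) t)
    (hV' : ∀ t ∈ Set.Ici a, V' t ≤ -(c * ‖g t‖ ^ 2)) : AntitoneOn V (Set.Ici a) :=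
  antitoneOn_of_hasDerivWithinAt_nonpos (convex_Ici a) (fun t ht => (hV t ht).continuousWithinAt)
    (fun t ht => (hV t (interior_subset ht)).mono interior_subset)
    fun t ht => (hV' t (interior_subset ht)).trans (neg_nonpos.2 (by positivity))

theorem tendsto_zero_of_deriv_le_neg_mul_norm_sq {V V' : ℝ → ℝ} {g : ℝ → E} {c m : ℝ} (hc : 0 < c)
    (hV : ∀ t ∈ Set.Ici a, HasDerivWithinAt V (V' t) (Set.Ici a) t)
    (hV' : ∀ t ∈ Set.Ici a, V' t ≤ -(c * ‖g t‖ ^ 2)) (hm : ∀ t ∈ Set.Ici a, m ≤ V t)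
    (hg : UniformContinuousOn g (Set.Ici a)) : Tendsto g atTop (𝓝 0) := by
  obtain ⟨l, hl⟩ := exists_tendsto_of_antitoneOn_Ici
    (antitoneOn_of_deriv_le_neg_mul_norm_sq hc.le hV hV') hm
  rw [NormedAddGroup.tendsto_nhds_zero]
  intro ε hε
  obtain ⟨δ, hδ, hclose⟩ := exists_forall_mem_Icc_norm_sub_le hg (half_pos hε)
  have hdrop := NormedAddGroup.tendsto_nhds_zero.1 (tendsto_sub_shift_of_tendsto hl δ)
    (c * (ε / 2) ^ 2 * δ) (by positivity)
  filter_upwards [hdrop, eventually_gt_atTop a] with t ht hat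
  by_contra! hlarge
  have hrate : ∀ s ∈ Set.Icc t (t + δ), V' s ≤ -(c * (ε / 2) ^ 2) := fun s hs => by
    have hgs : ε / 2 ≤ ‖g s‖ := by
      linarith [hclose t hat.le s hs, norm_sub_norm_le (g t) (g s), norm_sub_rev (g t) (g s)]
    refine (hV' s (hat.le.trans hs.1)).trans (neg_le_neg ?_)
    gcongr
  have hderiv : ∀ s ∈ Set.Icc t (t + δ), HasDerivAt V (V' s) s := fun s hs =>
    (hV s (hat.le.trans hs.1)).hasDerivAt (Ici_mem_nhds (hat.trans_le hs.1))
  have hmean : V (t + δ) - V t ≤ -(c * (ε / 2) ^ 2) * (t + δ - t) :=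
    (convex_Icc t (t + δ)).image_sub_le_mul_sub_of_deriv_le
      (fun s hs => (hderiv s hs).continuousAt.continuousWithinAt)
      (fun s hs => (hderiv s (interior_subset hs)).differentiableAt.differentiableWithinAt)
      (fun s hs => (hderiv s (interior_subset hs)).deriv ▸ hrate s (interior_subset hs))
      _ (Set.left_mem_Icc.2 (by linarith)) _ (Set.right_mem_Icc.2 (by linarith)) (by linarith)
  rw [Real.norm_eq_abs, abs_lt] at ht
  linarith [ht.1]

end Barbalat

section IntegralCurve

variable {E F : Type*} [NormedAddCommGroup E] [NormedSpace ℝ E] [NormedAddCommGroup F]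
  {X : E → E} {q : ℝ → E} {K : Set E}

lemma uniformContinuousOn_comp_of_isIntegralCurveOn {s : Set ℝ} (hs : Convex ℝ s)
    (hX : ContinuousOn X K) (hq : IsIntegralCurveOn q (fun _ => X) s) (hK : IsCompact K)
    (hqK : Set.MapsTo q s K) {g : E → F} (hg : ContinuousOn g K) :
    UniformContinuousOn (fun t => g (q t)) s := by
  obtain ⟨C, hC⟩ := (hK.image_of_continuousOn hX).isBounded.exists_norm_le
  have hlip : LipschitzOnWith C.toNNReal q s :=
    hs.lipschitzOnWith_of_nnnorm_hasDerivWithin_le hq fun t ht =>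
      NNReal.le_toNNReal_of_coe_le (hC _ ⟨q t, hqK ht, rfl⟩)
  exact (hK.uniformContinuousOn_of_continuous hg).comp hlip.uniformContinuousOn hqK

theorem tendsto_zero_of_fderiv_le_neg_mul_norm_sq {V : E → ℝ} {g : E → F} {a c : ℝ} (hc : 0 < c)
    (hX : Continuous X) (hq : IsIntegralCurveOn q (fun _ => X) (Set.Ici a))
    (hV : Differentiable ℝ V) (hK : IsCompact {e | V e ≤ V (q a)}) (hg : Continuous g)
    (hdecay : ∀ e, fderiv ℝ V e (X e) ≤ -(c * ‖g e‖ ^ 2)) :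
    Set.MapsTo q (Set.Ici a) {e | V e ≤ V (q a)} ∧ Tendsto (fun t => g (q t)) atTop (𝓝 0) := by
  have hVq : ∀ t ∈ Set.Ici a,
      HasDerivWithinAt (fun t => V (q t)) (fderiv ℝ V (q t) (X (q t))) (Set.Ici a) t :=
    fun t ht => (hV (q t)).hasFDerivAt.comp_hasDerivWithinAt t (hq t ht)
  have hmaps : Set.MapsTo q (Set.Ici a) {e | V e ≤ V (q a)} := fun t ht =>
    antitoneOn_of_deriv_le_neg_mul_norm_sq hc.le hVq (fun t _ => hdecay (q t))
      Set.self_mem_Ici ht ht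
  obtain ⟨m, hm⟩ := (hK.image hV.continuous).bddBelow
  exact ⟨hmaps, tendsto_zero_of_deriv_le_neg_mul_norm_sq hc hVq (fun t _ => hdecay (q t))
    (fun t ht => hm ⟨q t, hmaps ht, rfl⟩)
    (uniformContinuousOn_comp_of_isIntegralCurveOn (convex_Ici a) hX.continuousOn hq hK hmaps
      hg.continuousOn)⟩

end IntegralCurve

lemma tendsto_infDist_zero_of_tendsto_comp {α M Y : Type*} [PseudoMetricSpace M]
    [TopologicalSpace Y] [T2Space Y] {l : Filter α} {q : α → M} {K S : Set M} {ψ : M → Y} {y₀ : Y}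
    (hK : IsCompact K) (hqK : ∀ᶠ t in l, q t ∈ K) (hψ : ContinuousOn ψ K)
    (hlim : Tendsto (fun t => ψ (q t)) l (𝓝 y₀)) (hS : ∀ e ∈ K, ψ e = y₀ → e ∈ S) :
    Tendsto (fun t => infDist (q t) S) l (𝓝 0) := by
  refine tendsto_order.2 ⟨fun ε hε => .of_forall fun t => hε.trans_le infDist_nonneg,
    fun ε hε => ?_⟩
  have hfar : IsCompact (K ∩ {e | ε ≤ infDist e S}) :=
    hK.inter_right (isClosed_le continuous_const (continuous_infDist_pt S))
  have hclosed : IsClosed (ψ '' (K ∩ {e | ε ≤ infDist e S})) :=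
    (hfar.image_of_continuousOn (hψ.mono Set.inter_subset_left)).isClosed
  have hy₀ : y₀ ∉ ψ '' (K ∩ {e | ε ≤ infDist e S}) := by
    rintro ⟨e, ⟨heK, he⟩, rfl⟩
    exact (hε.trans_le he).ne' (infDist_zero_of_mem (hS e heK rfl))
  filter_upwards [hlim (hclosed.isOpen_compl.mem_nhds hy₀), hqK] with t hψt hqt
  by_contra! hdist
  exact hψt ⟨q t, ⟨hqt, hdist⟩, rfl⟩

section Linearization

variable {E : Type*} [NormedAddCommGroup E] [InnerProductSpace ℝ E]

lemma hasFDerivAt_log_norm_sub_sq_add {b y : E} {e : ℝ} (hy : ‖y - b‖ ^ 2 + e ≠ 0) :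
    HasFDerivAt (fun y => log (‖y - b‖ ^ 2 + e))
      ((‖y - b‖ ^ 2 + e)⁻¹ • (2 • innerSL ℝ (y - b))) y :=
  HasFDerivAt.log (by simpa using (((hasFDerivAt_id y).sub_const b).norm_sq).add_const e) hy

lemma two_mul_inner_lt_of_norm_le {r v : E} {M η : ℝ} (hM : 0 ≤ M) (hη : 0 < η)
    (hv : ‖v‖ ≤ M * ‖r‖ + η) :
    2 * ⟪r, v⟫ < 2 * (M + 1) * (‖r‖ ^ 2 + η ^ 2) := by
  have hinner : ⟪r, v⟫ ≤ ‖r‖ * (M * ‖r‖ + η) :=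
    (real_inner_le_norm r v).trans (mul_le_mul_of_nonneg_left hv (norm_nonneg r))
  nlinarith [sq_nonneg (‖r‖ - η), sq_nonneg ‖r‖, mul_pos hη hη, mul_nonneg hM (sq_nonneg η)]

-- A minimum of `w y + c * log (‖y - b‖ ^ 2 + η ^ 2)` cannot be interior: along `f` the barrier
-- increases more slowly than `w` decreases.
lemma mul_log_le_of_fderiv_apply_le [ProperSpace E] {w : E → ℝ} {f : E → E} {b : E}
    {R η M δ : ℝ} (hR : 0 < R) (hη : 0 < η) (hM : 0 ≤ M) (hδ : 0 < δ)
    (hw : ∀ y ∈ closedBall b R, DifferentiableAt ℝ w y) (hw₀ : ∀ y ∈ sphere b R, 0 ≤ w y)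
    (hf : ∀ y ∈ ball b R, ‖f y‖ ≤ M * ‖y - b‖ + η)
    (hdecay : ∀ y ∈ ball b R, fderiv ℝ w y (f y) ≤ -δ) :
    δ / (2 * (M + 1)) * log ((R ^ 2 + η ^ 2) / η ^ 2) ≤ w b := by
  set c := δ / (2 * (M + 1)) with hc
  have hc₀ : 0 < c := by positivity
  let ψ : E → ℝ := fun y => w y + c * log (‖y - b‖ ^ 2 + η ^ 2)
  have hψ : ∀ y ∈ closedBall b R, HasFDerivAt ψ (fderiv ℝ w y +
      c • ((‖y - b‖ ^ 2 + η ^ 2)⁻¹ • (2 • innerSL ℝ (y - b)))) y := fun y hy =>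
    (hw y hy).hasFDerivAt.add ((hasFDerivAt_log_norm_sub_sq_add (by positivity)).const_mul c)
  obtain ⟨y, hy, hmin⟩ := (isCompact_closedBall b R).exists_isMinOn
    ⟨b, mem_closedBall_self hR.le⟩ fun y hy => (hψ y hy).continuousAt.continuousWithinAt
  have hsphere : y ∈ sphere b R := by
    by_contra hinterior
    have hball : y ∈ ball b R := lt_of_le_of_ne hy hinterior
    have hcrit := congrArg (fun T : E →L[ℝ] ℝ => T (f y))
      ((hmin.isLocalMin (closedBall_mem_nhds_of_mem hball)).hasFDerivAt_eq_zero (hψ y hy))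
    have hinner : c * ((‖y - b‖ ^ 2 + η ^ 2)⁻¹ * (2 * ⟪y - b, f y⟫)) < δ :=
      calc c * ((‖y - b‖ ^ 2 + η ^ 2)⁻¹ * (2 * ⟪y - b, f y⟫))
          < c * ((‖y - b‖ ^ 2 + η ^ 2)⁻¹ * (2 * (M + 1) * (‖y - b‖ ^ 2 + η ^ 2))) :=
            mul_lt_mul_of_pos_left (mul_lt_mul_of_pos_left
              (two_mul_inner_lt_of_norm_le hM hη (hf y hball)) (by positivity)) hc₀
        _ = δ := by rw [hc]; field_simp
    have hcrit' : fderiv ℝ w y (f y) + c * ((‖y - b‖ ^ 2 + η ^ 2)⁻¹ * (2 * ⟪y - b, f y⟫)) = 0 := by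
      simpa [inner_sub_left] using hcrit
    linarith [hdecay y hball]
  have hψb : ψ y ≤ ψ b := hmin (mem_closedBall_self hR.le)
  simp only [ψ, sub_self, norm_zero, mem_sphere_iff_norm.1 hsphere, ne_eq, OfNat.ofNat_ne_zero,
    not_false_eq_true, zero_pow, zero_add] at hψb
  rw [log_div (by positivity) (by positivity)]
  linarith [hw₀ y hsphere]

lemma lt_log_sq_add_sq_div_sq {R : ℝ} (hR : 0 < R) (Λ : ℝ) :
    Λ < log ((R ^ 2 + (R * exp (-Λ / 2)) ^ 2) / (R * exp (-Λ / 2)) ^ 2) := by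
  have hexp : exp (-Λ / 2) ^ 2 * exp Λ = 1 := by
    rw [← exp_nat_mul, ← exp_add]
    simp [field]
  rw [lt_log_iff_exp_lt (by positivity), lt_div_iff₀ (by positivity)]
  calc exp Λ * (R * exp (-Λ / 2)) ^ 2 = R ^ 2 * (exp (-Λ / 2) ^ 2 * exp Λ) := by ring
    _ = R ^ 2 := by rw [hexp, mul_one]
    _ < R ^ 2 + (R * exp (-Λ / 2)) ^ 2 := lt_add_of_pos_right _ (by positivity)

lemma norm_sub_mem_Icc_of_mem_closedBall {G : Type*} [SeminormedAddCommGroup G] {a b y : G}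
    (hy : y ∈ closedBall b (‖b - a‖ / 2)) : ‖y - a‖ ∈ Set.Icc (‖b - a‖ / 2) (2 * ‖b - a‖) := by
  rw [mem_closedBall, dist_eq_norm] at hy
  have hlower := norm_sub_norm_le (b - a) (b - y)
  have hupper := norm_add_le (y - b) (b - a)
  rw [sub_sub_sub_cancel_left, norm_sub_rev b y] at hlower
  rw [sub_add_sub_cancel] at hupper
  exact ⟨by linarith, by linarith [norm_nonneg (b - a)]⟩

lemma norm_le_of_norm_sub_apply_le {𝕜 G H : Type*} [NontriviallyNormedField 𝕜]
    [SeminormedAddCommGroup G] [NormedSpace 𝕜 G] [SeminormedAddCommGroup H] [NormedSpace 𝕜 H]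
    {A : G →L[𝕜] H} {a b y : G} {v : H} {ε : ℝ} (hAb : A (b - a) = 0)
    (hv : ‖v - A (y - a)‖ ≤ ε) : ‖v‖ ≤ ‖A‖ * ‖y - b‖ + ε := by
  have hAy : A (y - a) = A (y - b) := by
    rw [← sub_add_sub_cancel y b a, map_add, hAb, add_zero]
  calc ‖v‖ = ‖A (y - b) + (v - A (y - a))‖ := by rw [hAy, add_sub_cancel]
    _ ≤ ‖A‖ * ‖y - b‖ + ε := (norm_add_le _ _).trans (add_le_add (A.le_opNorm _) hv)

variable [ProperSpace E] {w : E → ℝ} {f : E → E} {A : E →L[ℝ] E} {a : E} {β γ : ℝ}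

-- Since `Λ` is arbitrary, this rules out an upper bound on `w b` of order `‖b - a‖ ^ 2`.
lemma mul_lt_of_fderiv_apply_le_of_apply_sub_eq_zero {b : E} (hγ : 0 < γ) (hba : b ≠ a)
    (hAb : A (b - a) = 0) (Λ : ℝ) (hw : ∀ y ∈ closedBall b (‖b - a‖ / 2), DifferentiableAt ℝ w y)
    (hw₀ : ∀ y ∈ sphere b (‖b - a‖ / 2), 0 ≤ w y)
    (hdecay : ∀ y ∈ ball b (‖b - a‖ / 2), fderiv ℝ w y (f y) ≤ -(γ * ‖y - a‖ ^ 2))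
    (hf : ∀ y ∈ ball b (‖b - a‖ / 2), ‖f y - A (y - a)‖ ≤ exp (-Λ / 2) / 4 * ‖y - a‖) :
    γ * (‖b - a‖ / 2) ^ 2 / (2 * (‖A‖ + 1)) * Λ < w b := by
  set ρ := ‖b - a‖
  have hρ : 0 < ρ := norm_pos_iff.2 (sub_ne_zero.2 hba)
  have hgrowth : ∀ y ∈ ball b (ρ / 2), ‖f y‖ ≤ ‖A‖ * ‖y - b‖ + ρ / 2 * exp (-Λ / 2) :=
    fun y hy => norm_le_of_norm_sub_apply_le hAb <|
      calc ‖f y - A (y - a)‖ ≤ exp (-Λ / 2) / 4 * ‖y - a‖ := hf y hy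
        _ ≤ exp (-Λ / 2) / 4 * (2 * ρ) := by
          gcongr
          exact (norm_sub_mem_Icc_of_mem_closedBall (ball_subset_closedBall hy)).2
        _ = ρ / 2 * exp (-Λ / 2) := by ring
  have hdecay' : ∀ y ∈ ball b (ρ / 2), fderiv ℝ w y (f y) ≤ -(γ * (ρ / 2) ^ 2) := fun y hy => by
    refine (hdecay y hy).trans (neg_le_neg ?_)
    gcongr
    exact (norm_sub_mem_Icc_of_mem_closedBall (ball_subset_closedBall hy)).1
  calc γ * (ρ / 2) ^ 2 / (2 * (‖A‖ + 1)) * Λ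
      < γ * (ρ / 2) ^ 2 / (2 * (‖A‖ + 1)) *
          log (((ρ / 2) ^ 2 + (ρ / 2 * exp (-Λ / 2)) ^ 2) / (ρ / 2 * exp (-Λ / 2)) ^ 2) :=
        mul_lt_mul_of_pos_left (lt_log_sq_add_sq_div_sq (half_pos hρ) Λ) (by positivity)
    _ ≤ w b := mul_log_le_of_fderiv_apply_le (half_pos hρ) (by positivity) (norm_nonneg A)
        (by positivity) hw hw₀ hgrowth hdecay'

theorem eventually_apply_sub_ne_zero_of_fderiv_apply_le (hγ : 0 < γ)
    (hw : ∀ᶠ y in 𝓝 a, DifferentiableAt ℝ w y) (hw₀ : ∀ᶠ y in 𝓝 a, 0 ≤ w y)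
    (hwβ : ∀ᶠ y in 𝓝 a, w y ≤ β * ‖y - a‖ ^ 2)
    (hdecay : ∀ᶠ y in 𝓝 a, fderiv ℝ w y (f y) ≤ -(γ * ‖y - a‖ ^ 2))
    (hf : HasFDerivAt f A a) (hfa : f a = 0) : ∀ᶠ b in 𝓝[≠] a, A (b - a) ≠ 0 := by
  set Λ := 8 * (‖A‖ + 1) * β / γ with hΛ
  have hlin : ∀ᶠ y in 𝓝 a, ‖f y - A (y - a)‖ ≤ exp (-Λ / 2) / 4 * ‖y - a‖ := by
    simpa only [hfa, sub_zero] using hf.isLittleO.def (by positivity : 0 < exp (-Λ / 2) / 4)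
  obtain ⟨r, hr, hball⟩ := Metric.eventually_nhds_iff.1
    (((hw.and hw₀).and (hwβ.and hdecay)).and hlin)
  refine eventually_nhdsWithin_iff.2 (Metric.eventually_nhds_iff.2 ⟨r / 2, half_pos hr, ?_⟩)
  intro b hbr hba hAb
  have hnear : ∀ y ∈ closedBall b (‖b - a‖ / 2), dist y a < r := fun y hy => by
    rw [dist_eq_norm] at hbr ⊢
    linarith [(norm_sub_mem_Icc_of_mem_closedBall hy).2]
  have hlower := mul_lt_of_fderiv_apply_le_of_apply_sub_eq_zero hγ hba hAb Λ
    (fun y hy => (hball (hnear y hy)).1.1.1)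
    (fun y hy => (hball (hnear y (sphere_subset_closedBall hy))).1.1.2)
    (fun y hy => (hball (hnear y (ball_subset_closedBall hy))).1.2.2)
    (fun y hy => (hball (hnear y (ball_subset_closedBall hy))).2)
  have hupper : w b ≤ β * ‖b - a‖ ^ 2 :=
    (hball (hnear b (mem_closedBall_self (by positivity)))).1.2.1
  have hβ : γ * (‖b - a‖ / 2) ^ 2 / (2 * (‖A‖ + 1)) * Λ = β * ‖b - a‖ ^ 2 := by
    rw [hΛ]
    field_simp
    ring
  exact (hlower.trans_le hupper).ne hβ

theorem injective_of_fderiv_apply_le (hγ : 0 < γ)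
    (hw : ∀ᶠ y in 𝓝 a, DifferentiableAt ℝ w y) (hw₀ : ∀ᶠ y in 𝓝 a, 0 ≤ w y)
    (hwβ : ∀ᶠ y in 𝓝 a, w y ≤ β * ‖y - a‖ ^ 2)
    (hdecay : ∀ᶠ y in 𝓝 a, fderiv ℝ w y (f y) ≤ -(γ * ‖y - a‖ ^ 2))
    (hf : HasFDerivAt f A a) (hfa : f a = 0) : Function.Injective A := by
  refine (injective_iff_map_eq_zero A).2 fun v hAv => by_contra fun hv => ?_
  have hray : Tendsto (fun s : ℝ => a + s • v) (𝓝[≠] 0) (𝓝[≠] a) := by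
    simpa using (((hasDerivAt_id (0 : ℝ)).smul_const v).const_add a).tendsto_nhdsNE
      (by simpa using hv)
  obtain ⟨s, hs⟩ := (hray.eventually
    (eventually_apply_sub_ne_zero_of_fderiv_apply_le hγ hw hw₀ hwβ hdecay hf hfa)).exists
  exact hs (by rw [add_sub_cancel_left, map_smul, hAv, smul_zero])

end Linearization

theorem contDiffAt_of_eventually_apply_eq {𝕜 E F G : Type*} [RCLike 𝕜]
    [NormedAddCommGroup E] [NormedSpace 𝕜 E] [CompleteSpace E]
    [NormedAddCommGroup F] [NormedSpace 𝕜 F] [CompleteSpace F]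
    [NormedAddCommGroup G] [NormedSpace 𝕜 G] [CompleteSpace G]
    {n : ℕ∞ω} {f : E × F → G} {h : E → F} {u : E} (hf : ContDiffAt 𝕜 n f (u, h u)) (hn : n ≠ 0)
    (hinv : (fderiv 𝕜 f (u, h u) ∘L .inr 𝕜 E F).IsInvertible) (hh : ContinuousAt h u)
    (hfh : ∀ᶠ v in 𝓝 u, f (v, h v) = f (u, h u)) : ContDiffAt 𝕜 n h u := by
  have hgraph : Tendsto (fun v => (v, h v)) (𝓝 u) (𝓝 (u, h u)) :=
    continuousAt_id.prodMk hh
  refine (hf.contDiffAt_implicitFunction hn hinv).congr_of_eventuallyEq ?_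
  filter_upwards [hfh, hgraph.eventually (hf.eventually_apply_eq_iff_implicitFunction hn hinv)]
    with v hv hiff
  exact (hiff.1 hv).symm

lemma isInvertible_of_injective {E : Type*} [NormedAddCommGroup E] [NormedSpace ℝ E]
    [FiniteDimensional ℝ E] {A : E →L[ℝ] E} (hA : Function.Injective A) : A.IsInvertible :=
  ⟨(LinearEquiv.ofInjectiveEndo (A : E →ₗ[ℝ] E) hA).toContinuousLinearEquiv, rfl⟩

theorem contDiff_steadyState {E F : Type*} [NormedAddCommGroup E] [InnerProductSpace ℝ E]
    [FiniteDimensional ℝ E] [NormedAddCommGroup F] [NormedSpace ℝ F] [CompleteSpace F]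
    {n : ℕ∞ω} {f : E → F → E} {h : F → E} {W : E → F → ℝ} {β γ : ℝ} (hγ : 0 < γ) (hn : n ≠ 0)
    (hf : ContDiff ℝ n (Function.uncurry f)) (hh : Continuous h) (hfh : ∀ u, f (h u) u = 0)
    (hW : Differentiable ℝ (Function.uncurry W)) (hW₀ : ∀ x u, 0 ≤ W x u)
    (hWβ : ∀ x u, W x u ≤ β * ‖x - h u‖ ^ 2)
    (hdecay : ∀ x u, ⟪gradient (fun y => W y u) x, f x u⟫ ≤ -(γ * ‖x - h u‖ ^ 2)) :
    ContDiff ℝ n h := by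
  refine contDiff_iff_contDiffAt.2 fun u => ?_
  have hswap : ContDiff ℝ n fun p : F × E => f p.2 p.1 := hf.comp (contDiff_snd.prodMk contDiff_fst)
  have hpartial : HasFDerivAt (fun y => f y u)
      (fderiv ℝ (fun p : F × E => f p.2 p.1) (u, h u) ∘L .inr ℝ F E) (h u) :=
    (hswap.differentiable hn _).hasFDerivAt.comp (h u) (hasFDerivAt_prodMk_right u (h u))
  refine contDiffAt_of_eventually_apply_eq hswap.contDiffAt hn (isInvertible_of_injective ?_)
    hh.continuousAt (.of_forall fun v => by rw [hfh, hfh])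
  exact injective_of_fderiv_apply_le (w := fun y => W y u) hγ
    (.of_forall fun y => (hW.comp (differentiable_id.prodMk (differentiable_const u))) y)
    (.of_forall fun y => hW₀ y u) (.of_forall fun y => hWβ y u)
    (.of_forall fun y => (inner_gradient_left (𝕜 := ℝ)).ge.trans (hdecay y u)) hpartial (hfh u)

section PartialGradient

variable {E F : Type*} [NormedAddCommGroup E] [InnerProductSpace ℝ E]
  [NormedAddCommGroup F] [InnerProductSpace ℝ F] {P : E → F → ℝ}

lemma hasGradientAt_uncurry_left [CompleteSpace E] {a : E} {b : F}
    (hP : DifferentiableAt ℝ (Function.uncurry P) (a, b)) :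
    HasGradientAt (fun y => P y b) ((InnerProductSpace.toDual ℝ E).symm
      (fderiv ℝ (Function.uncurry P) (a, b) ∘L .inl ℝ E F)) a :=
  (HasFDerivAt.comp (f := fun y => (y, b)) a hP.hasFDerivAt
    (hasFDerivAt_prodMk_left a b)).hasGradientAt

lemma hasGradientAt_uncurry_right [CompleteSpace F] {a : E} {b : F}
    (hP : DifferentiableAt ℝ (Function.uncurry P) (a, b)) :
    HasGradientAt (fun v => P a v) ((InnerProductSpace.toDual ℝ F).symm
      (fderiv ℝ (Function.uncurry P) (a, b) ∘L .inr ℝ E F)) b :=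
  (HasFDerivAt.comp (g := Function.uncurry P) b hP.hasFDerivAt
    (hasFDerivAt_prodMk_right a b)).hasGradientAt

lemma fderiv_uncurry_apply [CompleteSpace E] [CompleteSpace F] {a : E} {b : F}
    (hP : DifferentiableAt ℝ (Function.uncurry P) (a, b)) (v : E) (w : F) :
    fderiv ℝ (Function.uncurry P) (a, b) (v, w) =
      ⟪gradient (fun y => P y b) a, v⟫ + ⟪gradient (fun y => P a y) b, w⟫ := by
  rw [(hasGradientAt_uncurry_left hP).gradient, (hasGradientAt_uncurry_right hP).gradient,
    InnerProductSpace.toDual_symm_apply, InnerProductSpace.toDual_symm_apply]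
  simp [← map_add]

lemma continuous_gradient_uncurry_left [CompleteSpace E] (hP : ContDiff ℝ 1 (Function.uncurry P)) :
    Continuous fun q : E × F => gradient (fun y => P y q.2) q.1 := by
  simp only [fun q : E × F =>
    (hasGradientAt_uncurry_left (hP.differentiable one_ne_zero (q.1, q.2))).gradient]
  exact (LinearIsometryEquiv.continuous _).comp
    ((hP.continuous_fderiv one_ne_zero).clm_comp continuous_const)

lemma continuous_gradient_uncurry_right [CompleteSpace F] (hP : ContDiff ℝ 1 (Function.uncurry P)) :
    Continuous fun q : E × F => gradient (fun v => P q.1 v) q.2 := by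
  simp only [fun q : E × F =>
    (hasGradientAt_uncurry_right (hP.differentiable one_ne_zero (q.1, q.2))).gradient]
  exact (LinearIsometryEquiv.continuous _).comp
    ((hP.continuous_fderiv one_ne_zero).clm_comp continuous_const)

end PartialGradient

lemma exists_pos_mul_add_sq_le_of_sq_lt_mul {p r k : ℝ} (hp : 0 < p) (hk : k ^ 2 < p * r) :
    ∃ c > 0, ∀ a b : ℝ, c * (a ^ 2 + b ^ 2) ≤ p * a ^ 2 - 2 * k * a * b + r * b ^ 2 := by
  have hr : 0 < r := pos_of_mul_pos_right ((sq_nonneg k).trans_lt hk) hp.le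
  refine ⟨(p * r - k ^ 2) / (p + r), div_pos (sub_pos.2 hk) (add_pos hp hr), fun a b => ?_⟩
  rw [div_mul_eq_mul_div, div_le_iff₀ (add_pos hp hr)]
  have hsquares : (p * a ^ 2 - 2 * k * a * b + r * b ^ 2) * (p + r) -
      (p * r - k ^ 2) * (a ^ 2 + b ^ 2) = (p * a - k * b) ^ 2 + (r * b - k * a) ^ 2 := by ring
  linarith [sq_nonneg (p * a - k * b), sq_nonneg (r * b - k * a), hsquares]

lemma norm_prodMk_sq_le {G H : Type*} [SeminormedAddCommGroup G] [SeminormedAddCommGroup H]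
    (a : G) (b : H) : ‖(a, b)‖ ^ 2 ≤ ‖a‖ ^ 2 + ‖b‖ ^ 2 := by
  rw [Prod.norm_mk]
  rcases max_choice ‖a‖ ‖b‖ with hmax | hmax <;> rw [hmax]
  · exact le_add_of_nonneg_right (sq_nonneg _)
  · exact le_add_of_nonneg_left (sq_nonneg _)

section HeavyBall

variable {E F : Type*} [NormedAddCommGroup E] [InnerProductSpace ℝ E]
  [NormedAddCommGroup F] [InnerProductSpace ℝ F]

/-- The Lyapunov function of the closed loop: potential `P`, kinetic energy of the momentum `z`,
and the plant Lyapunov function `W` with weight `μ`. -/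
noncomputable def energy (P : F → ℝ) (W : E → F → ℝ) (μ : ℝ) (q : E × F × F) : ℝ :=
  P q.2.1 + ‖q.2.2‖ ^ 2 / 2 + μ * W q.1 q.2.1

variable {P : F → ℝ} {W : E → F → ℝ} {μ : ℝ}

lemma hasFDerivAt_energy {q : E × F × F} (hP : DifferentiableAt ℝ P q.2.1)
    (hW : DifferentiableAt ℝ (Function.uncurry W) (q.1, q.2.1)) :
    HasFDerivAt (energy P W μ)
      (fderiv ℝ P q.2.1 ∘L .fst ℝ F F ∘L .snd ℝ E (F × F) +
        innerSL ℝ q.2.2 ∘L .snd ℝ F F ∘L .snd ℝ E (F × F) +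
        μ • (fderiv ℝ (Function.uncurry W) (q.1, q.2.1) ∘L
          (ContinuousLinearMap.fst ℝ E (F × F)).prod (.fst ℝ F F ∘L .snd ℝ E (F × F)))) q := by
  have hu : HasFDerivAt (fun q : E × F × F => q.2.1) (.fst ℝ F F ∘L .snd ℝ E (F × F)) q :=
    hasFDerivAt_fst.comp q hasFDerivAt_snd
  have hz : HasFDerivAt (fun q : E × F × F => q.2.2) (.snd ℝ F F ∘L .snd ℝ E (F × F)) q :=
    hasFDerivAt_snd.comp q hasFDerivAt_snd
  have hkinetic : HasFDerivAt (fun q : E × F × F => ‖q.2.2‖ ^ 2 / 2)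
      (innerSL ℝ q.2.2 ∘L .snd ℝ F F ∘L .snd ℝ E (F × F)) q := by
    refine (hz.norm_sq.mul_const 2⁻¹).congr_fderiv ?_
    ext v <;> simp
  exact ((hP.hasFDerivAt.comp q hu).add hkinetic).add
    ((hW.hasFDerivAt.comp q (hasFDerivAt_fst.prodMk hu)).const_mul μ)

variable [CompleteSpace E] [CompleteSpace F]

/-- The reduced gradient `H(u)ᵀ∇Φ(x,u) = Dh(u)ᵀ∇ₓΦ(x,u) + ∇ᵤΦ(x,u)`, evaluated at an arbitrary
plant state `x`; at `x = h u` it is the gradient of the steady-state cost `u ↦ Φ(h(u),u)`. -/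
noncomputable def reducedGradient (h : F → E) (Φ : E → F → ℝ) (x : E) (u : F) : F :=
  ContinuousLinearMap.adjoint (fderiv ℝ h u) (gradient (fun y => Φ y u) x) +
    gradient (fun v => Φ x v) u

/-- The closed-loop vector field on states `(x, u, z)` of the plant `ẋ = f(x,u)` under the
heavy-ball feedback `u̇ = Q(u)z`, `ż = -D(u)z - Q(u)H(u)ᵀ∇Φ(x,u)`. -/
noncomputable def heavyBallField (f : E → F → E) (h : F → E) (Φ : E → F → ℝ) (Q D : F → F →L[ℝ] F)
    (q : E × F × F) : E × F × F :=
  (f q.1 q.2.1, Q q.2.1 q.2.2,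
    -(D q.2.1 q.2.2) - Q q.2.1 (reducedGradient h Φ q.1 q.2.1))

variable {f : E → F → E} {h : F → E} {Φ : E → F → ℝ} {Q D : F → F →L[ℝ] F}

lemma reducedGradient_sub (x x' : E) (u : F) :
    reducedGradient h Φ x' u - reducedGradient h Φ x u =
      ContinuousLinearMap.adjoint (fderiv ℝ h u)
          (gradient (fun y => Φ y u) x' - gradient (fun y => Φ y u) x) +
        (gradient (fun v => Φ x' v) u - gradient (fun v => Φ x v) u) := by
  rw [reducedGradient, reducedGradient, map_sub, add_sub_add_comm]

lemma hasGradientAt_comp_steadyState {u : F} (hh : DifferentiableAt ℝ h u)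
    (hΦ : DifferentiableAt ℝ (Function.uncurry Φ) (h u, u)) :
    HasGradientAt (fun v => Φ (h v) v) (reducedGradient h Φ (h u) u) u := by
  rw [hasGradientAt_iff_hasFDerivAt]
  refine (HasFDerivAt.comp (f := fun v => (h v, v)) u hΦ.hasFDerivAt
    (hh.hasFDerivAt.prodMk (hasFDerivAt_id u))).congr_fderiv ?_
  ext w
  rw [ContinuousLinearMap.comp_apply, ContinuousLinearMap.prod_apply, fderiv_uncurry_apply hΦ,
    InnerProductSpace.toDual_apply_apply, reducedGradient, inner_add_left,
    ContinuousLinearMap.adjoint_inner_left, ContinuousLinearMap.id_apply]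

lemma continuous_uncurry_reducedGradient (hh : ContDiff ℝ 1 h)
    (hΦ : ContDiff ℝ 1 (Function.uncurry Φ)) :
    Continuous (Function.uncurry (reducedGradient h Φ)) :=
  ((ContinuousLinearMap.adjoint.continuous.comp
    ((hh.continuous_fderiv one_ne_zero).comp continuous_snd)).clm_apply
      (continuous_gradient_uncurry_left hΦ)).add (continuous_gradient_uncurry_right hΦ)

lemma continuous_heavyBallField (hf : Continuous (Function.uncurry f))
    (hG : Continuous (Function.uncurry (reducedGradient h Φ))) (hQ : Continuous Q)
    (hD : Continuous D) : Continuous (heavyBallField f h Φ Q D) := by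
  unfold heavyBallField
  fun_prop

lemma fderiv_energy_heavyBallField {x : E} {u z : F} (hh : DifferentiableAt ℝ h u)
    (hΦ : DifferentiableAt ℝ (Function.uncurry Φ) (h u, u))
    (hW : DifferentiableAt ℝ (Function.uncurry W) (x, u)) (hQ : (Q u : F →ₗ[ℝ] F).IsSymmetric) :
    fderiv ℝ (energy (fun v => Φ (h v) v) W μ) (x, u, z) (heavyBallField f h Φ Q D (x, u, z)) =
      ⟪reducedGradient h Φ (h u) u - reducedGradient h Φ x u, Q u z⟫ - ⟪D u z, z⟫ +
        μ * (⟪gradient (fun y => W y u) x, f x u⟫ + ⟪gradient (fun v => W x v) u, Q u z⟫) := by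
  have hP := hasGradientAt_comp_steadyState hh hΦ
  have hQz : ⟪z, Q u (reducedGradient h Φ x u)⟫ = ⟪reducedGradient h Φ x u, Q u z⟫ := by
    rw [real_inner_comm]
    exact hQ _ _
  rw [(hasFDerivAt_energy hP.differentiableAt hW).fderiv, ← fderiv_uncurry_apply hW]
  simp only [heavyBallField, add_apply, smul_apply,
    ContinuousLinearMap.comp_apply, ContinuousLinearMap.prod_apply, ContinuousLinearMap.coe_fst',
    ContinuousLinearMap.coe_snd', innerSL_apply_apply, smul_eq_mul, hP.fderiv_apply,
    inner_sub_right, inner_neg_right, inner_sub_left, hQz, real_inner_comm z (D u z)]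
  ring

-- The weight `L / ζ` balances the two cross terms: each is at most `κ * L * ‖z‖ * ‖x - h u‖`.
lemma fderiv_energy_heavyBallField_le {γ ζ L κ lam : ℝ} {x : E} {u z : F} (hζ : 0 < ζ) (hL : 0 ≤ L)
    (hh : DifferentiableAt ℝ h u) (hΦ : DifferentiableAt ℝ (Function.uncurry Φ) (h u, u))
    (hW : DifferentiableAt ℝ (Function.uncurry W) (x, u))
    (hdecay : ⟪gradient (fun y => W y u) x, f x u⟫ ≤ -(γ * ‖x - h u‖ ^ 2))
    (hgradu : ‖gradient (fun v => W x v) u‖ ≤ ζ * ‖x - h u‖)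
    (hG : ‖reducedGradient h Φ (h u) u - reducedGradient h Φ x u‖ ≤ L * ‖x - h u‖)
    (hQ : (Q u : F →ₗ[ℝ] F).IsSymmetric) (hκ : ‖Q u‖ ≤ κ) (hD : lam * ‖z‖ ^ 2 ≤ ⟪D u z, z⟫) :
    fderiv ℝ (energy (fun v => Φ (h v) v) W (L / ζ)) (x, u, z) (heavyBallField f h Φ Q D (x, u, z))
      ≤ -(lam * ‖z‖ ^ 2 - 2 * (κ * L) * ‖z‖ * ‖x - h u‖ + L / ζ * γ * ‖x - h u‖ ^ 2) := by
  have hQz : ‖Q u z‖ ≤ κ * ‖z‖ := (Q u).le_of_opNorm_le hκ z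
  have hcost : ⟪reducedGradient h Φ (h u) u - reducedGradient h Φ x u, Q u z⟫ ≤
      L * ‖x - h u‖ * (κ * ‖z‖) :=
    (real_inner_le_norm _ _).trans (mul_le_mul hG hQz (norm_nonneg _) (by positivity))
  have hdrift : ⟪gradient (fun v => W x v) u, Q u z⟫ ≤ ζ * ‖x - h u‖ * (κ * ‖z‖) :=
    (real_inner_le_norm _ _).trans (mul_le_mul hgradu hQz (norm_nonneg _) (by positivity))
  rw [fderiv_energy_heavyBallField hh hΦ hW hQ]
  calc _ ≤ L * ‖x - h u‖ * (κ * ‖z‖) - lam * ‖z‖ ^ 2 +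
        L / ζ * (-(γ * ‖x - h u‖ ^ 2) + ζ * ‖x - h u‖ * (κ * ‖z‖)) := by gcongr
    _ = _ := by field_simp; ring

theorem exists_pos_fderiv_energy_heavyBallField_le {γ ζ L κ lam : ℝ} (hζ : 0 < ζ) (hL : 0 < L)
    (hlam : 0 < lam) (hh : Differentiable ℝ h) (hΦ : Differentiable ℝ (Function.uncurry Φ))
    (hW : Differentiable ℝ (Function.uncurry W))
    (hdecay : ∀ x u, ⟪gradient (fun y => W y u) x, f x u⟫ ≤ -(γ * ‖x - h u‖ ^ 2))
    (hgradu : ∀ x u, ‖gradient (fun v => W x v) u‖ ≤ ζ * ‖x - h u‖)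
    (hG : ∀ x x' u, ‖reducedGradient h Φ x' u - reducedGradient h Φ x u‖ ≤ L * ‖x' - x‖)
    (hQ : ∀ u, (Q u : F →ₗ[ℝ] F).IsSymmetric) (hκ : ∀ u, ‖Q u‖ ≤ κ)
    (hD : ∀ u z, lam * ‖z‖ ^ 2 ≤ ⟪D u z, z⟫) (hgain : κ ^ 2 / lam < γ / (ζ * L)) :
    ∃ c > 0, ∀ e, fderiv ℝ (energy (fun u => Φ (h u) u) W (L / ζ)) e
      (heavyBallField f h Φ Q D e) ≤ -(c * ‖(e.2.2, e.1 - h e.2.1)‖ ^ 2) := by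
  have hdiscr : (κ * L) ^ 2 < lam * (L / ζ * γ) := by
    rw [div_lt_div_iff₀ hlam (mul_pos hζ hL)] at hgain
    calc (κ * L) ^ 2 = κ ^ 2 * (ζ * L) * (L / ζ) := by field_simp
      _ < γ * lam * (L / ζ) := mul_lt_mul_of_pos_right hgain (div_pos hL hζ)
      _ = lam * (L / ζ * γ) := by ring
  obtain ⟨c, hc, hform⟩ := exists_pos_mul_add_sq_le_of_sq_lt_mul hlam hdiscr
  refine ⟨c, hc, fun ⟨x, u, z⟩ => ?_⟩
  have hGx : ‖reducedGradient h Φ (h u) u - reducedGradient h Φ x u‖ ≤ L * ‖x - h u‖ :=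
    norm_sub_rev x (h u) ▸ hG x (h u) u
  refine (fderiv_energy_heavyBallField_le hζ hL.le (hh u) (hΦ _) (hW _) (hdecay x u) (hgradu x u)
    hGx (hQ u) (hκ u) (hD u z)).trans (neg_le_neg ?_)
  exact (mul_le_mul_of_nonneg_left (norm_prodMk_sq_le z (x - h u)) hc.le).trans (hform _ _)

end HeavyBall

lemma isCompact_energy_le {E F : Type*} [NormedAddCommGroup E] [ProperSpace E]
    [NormedAddCommGroup F] [ProperSpace F] {P : F → ℝ} {W : E → F → ℝ} {h : F → E} {α μ : ℝ}
    (hα : 0 < α) (hμ : 0 < μ) (hP : Continuous P) (hW : Continuous (Function.uncurry W))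
    (hh : Continuous h) {C : ℝ} (hlevel : IsCompact {u | P u ≤ C})
    (hWα : ∀ x u, α * ‖x - h u‖ ^ 2 ≤ W x u) : IsCompact {q | energy P W μ q ≤ C} := by
  obtain ⟨m, hm⟩ := (hlevel.image hP).bddBelow
  have hbox : IsCompact ((fun q : E × F × F => (q.1 + h q.2.1, q.2)) ''
      (closedBall 0 √((C - m) / (μ * α)) ×ˢ {u | P u ≤ C} ×ˢ closedBall 0 √(2 * (C - m)))) :=
    ((isCompact_closedBall _ _).prod (hlevel.prod (isCompact_closedBall _ _))).image (by fun_prop)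
  have henergy : Continuous (energy P W μ) := by
    unfold energy
    fun_prop
  refine hbox.of_isClosed_subset (isClosed_le henergy continuous_const) ?_
  rintro ⟨x, u, z⟩ hq
  have hplant : μ * α * ‖x - h u‖ ^ 2 ≤ μ * W x u := by
    rw [mul_assoc]
    exact mul_le_mul_of_nonneg_left (hWα x u) hμ.le
  have hplant₀ : 0 ≤ μ * α * ‖x - h u‖ ^ 2 := by positivity
  have hkinetic₀ := sq_nonneg ‖z‖
  simp only [energy, Set.mem_ofPred_eq] at hq
  have hu : P u ≤ C := by linarith
  have hmu : m ≤ P u := hm ⟨u, hu, rfl⟩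
  refine ⟨(x - h u, u, z), ⟨mem_closedBall_zero_iff.2 (le_sqrt_of_sq_le ?_), hu,
    mem_closedBall_zero_iff.2 (le_sqrt_of_sq_le ?_)⟩, by simp only [sub_add_cancel]⟩
  · rw [le_div_iff₀' (by positivity)]
    linarith
  · linarith

lemma injective_of_inner_pos {E : Type*} [NormedAddCommGroup E] [InnerProductSpace ℝ E]
    {A : E →L[ℝ] E} (hA : ∀ v, v ≠ 0 → 0 < ⟪A v, v⟫) : Function.Injective A :=
  (injective_iff_map_eq_zero A).2 fun v hv => by_contra fun hv₀ => by
    simpa [hv] using hA v hv₀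

theorem stmt10_general {E F : Type*} [NormedAddCommGroup E] [InnerProductSpace ℝ E]
    [FiniteDimensional ℝ E] [NormedAddCommGroup F] [InnerProductSpace ℝ F] [FiniteDimensional ℝ F]
    {f : E → F → E} {h : F → E} {W Φ : E → F → ℝ} {Q D : F → F →L[ℝ] F}
    {α β γ ζ L κ lam : ℝ} (hα : 0 < α) (hγ : 0 < γ) (hζ : 0 < ζ) (hL : 0 < L) (hlam : 0 < lam)
    (hf : ContDiff ℝ 1 (Function.uncurry f)) (hh : Continuous h) (hsteady : ∀ u, f (h u) u = 0)
    (hW : Differentiable ℝ (Function.uncurry W))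
    (hWα : ∀ x u, α * ‖x - h u‖ ^ 2 ≤ W x u) (hWβ : ∀ x u, W x u ≤ β * ‖x - h u‖ ^ 2)
    (hdecay : ∀ x u, ⟪gradient (fun y => W y u) x, f x u⟫ ≤ -(γ * ‖x - h u‖ ^ 2))
    (hgradu : ∀ x u, ‖gradient (fun v => W x v) u‖ ≤ ζ * ‖x - h u‖)
    (hΦ : ContDiff ℝ 1 (Function.uncurry Φ)) (hlevel : ∀ c, IsCompact {u | Φ (h u) u ≤ c})
    (hG : ∀ x x' u,
      ‖reducedGradient h Φ x' u - reducedGradient h Φ x u‖ ≤ L * ‖x' - x‖)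
    (hQ : Continuous Q) (hD : Continuous D) (hQ_symm : ∀ u, (Q u : F →ₗ[ℝ] F).IsSymmetric)
    (hQ_inj : ∀ u, Function.Injective (Q u)) (hκ : ∀ u, ‖Q u‖ ≤ κ)
    (hDlam : ∀ u z, lam * ‖z‖ ^ 2 ≤ ⟪D u z, z⟫) (hgain : κ ^ 2 / lam < γ / (ζ * L))
    {q : ℝ → E × F × F}
    (hq : IsIntegralCurveOn q (fun _ => heavyBallField f h Φ Q D) (Set.Ici 0)) :
    Tendsto (fun t => infDist (q t)
      {q | q.2.2 = 0 ∧ q.1 = h q.2.1 ∧ reducedGradient h Φ q.1 q.2.1 = 0}) atTop (𝓝 0) := by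
  have hh' : ContDiff ℝ 1 h :=
    contDiff_steadyState hγ one_ne_zero hf hh hsteady hW
      (fun x u => (by positivity : 0 ≤ α * ‖x - h u‖ ^ 2).trans (hWα x u)) hWβ hdecay
  have hP : Differentiable ℝ fun u => Φ (h u) u := fun u =>
    (hasGradientAt_comp_steadyState (hh'.differentiable one_ne_zero u)
      (hΦ.differentiable one_ne_zero _)).differentiableAt
  have hX : Continuous (heavyBallField f h Φ Q D) :=
    continuous_heavyBallField hf.continuous (continuous_uncurry_reducedGradient hh' hΦ) hQ hD
  have hg : Continuous fun e : E × F × F => (e.2.2, e.1 - h e.2.1) := by fun_prop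
  obtain ⟨c, hc, hV⟩ := exists_pos_fderiv_energy_heavyBallField_le (f := f) hζ hL hlam
    (hh'.differentiable one_ne_zero) (hΦ.differentiable one_ne_zero) hW hdecay hgradu hG hQ_symm
    hκ hDlam hgain
  have hK := isCompact_energy_le hα (div_pos hL hζ) hP.continuous hW.continuous hh
    (hlevel (energy (fun u => Φ (h u) u) W (L / ζ) (q 0))) hWα
  obtain ⟨hmaps, hlim⟩ := tendsto_zero_of_fderiv_le_neg_mul_norm_sq hc hX hq
    (fun e => (hasFDerivAt_energy (hP _) (hW _)).differentiableAt) hK hg hV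
  have hzdot : Tendsto (fun t => (heavyBallField f h Φ Q D (q t)).2.2) atTop (𝓝 0) :=
    tendsto_deriv_zero_of_uniformContinuousOn (z := fun t => (q t).2.2)
      (fun t ht => (hq t ht).snd.snd) hlim.fst_nhds
      (uniformContinuousOn_comp_of_isIntegralCurveOn (convex_Ici 0) hX.continuousOn hq hK hmaps
        hX.snd.snd.continuousOn)
  refine tendsto_infDist_zero_of_tendsto_comp hK
    ((eventually_ge_atTop 0).mono fun t ht => hmaps ht) (hg.prodMk hX.snd.snd).continuousOn
    (hlim.prodMk_nhds hzdot) ?_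
  rintro ⟨x, u, z⟩ - he
  simp only [Prod.mk.injEq, Prod.mk_eq_zero, sub_eq_zero, heavyBallField] at he
  obtain ⟨⟨rfl, hx⟩, hGz⟩ := he
  exact ⟨rfl, hx, hQ_inj u (by simpa using hGz.symm)⟩

/-- Momentum (heavy-ball) feedback stability: if `‖Q(u)‖ ≤ κ`,
`⟨D(u)z,z⟩ ≥ λ‖z‖²` and `κ²/λ < γ/(ζL)`, every complete solution of
`ẋ = f(x,u)`, `u̇ = Q(u)z`, `ż = -D(u)z - Q(u)H(u)ᵀ∇Φ(x,u)` converges to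
`{(x,u,z) : z = 0, x = h(u), H(u)ᵀ∇Φ(x,u) = 0}`. -/
theorem stmt10 {n p : ℕ}
    (f : EuclideanSpace ℝ (Fin n) → EuclideanSpace ℝ (Fin p) → EuclideanSpace ℝ (Fin n))
    (h : EuclideanSpace ℝ (Fin p) → EuclideanSpace ℝ (Fin n))
    (W : EuclideanSpace ℝ (Fin n) → EuclideanSpace ℝ (Fin p) → ℝ)
    (Φ : EuclideanSpace ℝ (Fin n) → EuclideanSpace ℝ (Fin p) → ℝ)
    (Q D : EuclideanSpace ℝ (Fin p) → EuclideanSpace ℝ (Fin p) →L[ℝ] EuclideanSpace ℝ (Fin p))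
    (ℓ : ℝ≥0) (α β γ ζ L κ lam : ℝ)
    (hα : 0 < α) (hβ : 0 < β) (hγ : 0 < γ) (hζ : 0 < ζ) (hL : 0 < L)
    (hκ : 0 < κ) (hlam : 0 < lam)
    -- plant
    (hf_smooth : ContDiff ℝ 1 (Function.uncurry f))
    (hh_diff : Differentiable ℝ h)
    (hh_lip : LipschitzWith ℓ h)
    (hsteady : ∀ u, f (h u) u = 0)
    -- Lyapunov function for the plant
    (hW_diff : Differentiable ℝ (Function.uncurry W))
    (hW_lb : ∀ x u, α * ‖x - h u‖ ^ 2 ≤ W x u)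
    (hW_ub : ∀ x u, W x u ≤ β * ‖x - h u‖ ^ 2)
    (hW_decay : ∀ x u, ⟪gradient (fun y => W y u) x, f x u⟫ ≤ -γ * ‖x - h u‖ ^ 2)
    (hW_gradu : ∀ x u, ‖gradient (fun v => W x v) u‖ ≤ ζ * ‖x - h u‖)
    -- objective
    (hΦ_smooth : ContDiff ℝ 1 (Function.uncurry Φ))
    (hlevel : ∀ c : ℝ, IsCompact {u : EuclideanSpace ℝ (Fin p) | Φ (h u) u ≤ c})
    (hLbound : ∀ x x' u,
      ‖(ContinuousLinearMap.adjoint (fderiv ℝ h u)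
            (gradient (fun y => Φ y u) x' - gradient (fun y => Φ y u) x) +
          (gradient (fun v => Φ x' v) u - gradient (fun v => Φ x v) u))‖ ≤ L * ‖x' - x‖)
    -- metric and damping
    (hQ_lip : LocallyLipschitz Q) (hD_lip : LocallyLipschitz D)
    (hQ_symm : ∀ u v w, ⟪Q u v, w⟫ = ⟪v, Q u w⟫)
    (hQ_pos : ∀ u v, v ≠ 0 → 0 < ⟪Q u v, v⟫)
    (hD_symm : ∀ u v w, ⟪D u v, w⟫ = ⟪v, D u w⟫)
    (hD_pos : ∀ u v, v ≠ 0 → 0 < ⟪D u v, v⟫)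
    (hQ_bound : ∀ u, ‖Q u‖ ≤ κ)
    (hD_bound : ∀ u z, lam * ‖z‖ ^ 2 ≤ ⟪D u z, z⟫)
    (hgain : κ ^ 2 / lam < γ / (ζ * L))
    -- a complete solution of the interconnection
    (x : ℝ → EuclideanSpace ℝ (Fin n)) (u z : ℝ → EuclideanSpace ℝ (Fin p))
    (hsolx : ∀ t ≥ (0 : ℝ), HasDerivAt x (f (x t) (u t)) t)
    (hsolu : ∀ t ≥ (0 : ℝ), HasDerivAt u (Q (u t) (z t)) t)
    (hsolz : ∀ t ≥ (0 : ℝ), HasDerivAt z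
      (-(D (u t) (z t)) - Q (u t) (ContinuousLinearMap.adjoint (fderiv ℝ h (u t))
          (gradient (fun y => Φ y (u t)) (x t)) +
        gradient (fun v => Φ (x t) v) (u t))) t) :
    Tendsto (fun t => Metric.infDist (x t, u t, z t)
      {q : EuclideanSpace ℝ (Fin n) × EuclideanSpace ℝ (Fin p) × EuclideanSpace ℝ (Fin p) |
        q.2.2 = 0 ∧ q.1 = h q.2.1 ∧
        ContinuousLinearMap.adjoint (fderiv ℝ h q.2.1) (gradient (fun y => Φ y q.2.1) q.1) +
          gradient (fun v => Φ q.1 v) q.2.1 = 0})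
      atTop (nhds 0) := by
  refine stmt10_general hα hγ hζ hL hlam hf_smooth hh_diff.continuous hsteady hW_diff hW_lb hW_ub
    (fun x u => neg_mul γ _ ▸ hW_decay x u) hW_gradu hΦ_smooth hlevel
    (fun x x' u => reducedGradient_sub x x' u ▸ hLbound x x' u) hQ_lip.continuous hD_lip.continuous
    hQ_symm (fun u => injective_of_inner_pos (hQ_pos u)) hQ_bound hD_bound hgain
    (q := fun t => (x t, u t, z t)) fun t ht => ?_
  exact ((hsolx t ht).prodMk ((hsolu t ht).prodMk (hsolz t ht))).hasDerivWithinAt
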